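/- Let M=(Q,V,δ,q₀,F) be a DFAwtl, and suppose there are a state q and a letter a∈V such that: δ(q,a) is undefined; q is reachable, i.e., (q₀,u)⊨*(q,ε) for some word u; there is x∈V⁺ with (q,x)→*(q,ε) such that the state δ(q,x′) is a-deficient for every prefix x′ of x; and there are words y∈(V∖{a})* and z∈V* and a final state f∈F with (q,yaz)→*(f,ε) such that the state δ(q,y′) is a-deficient for every proper prefix y′ of y. Then for every n≥1 the word u·a·xⁿ·y·z belongs to L(M) and is accepted with at least n jumps; consequently JC_M is not constant-bounded (indeed linear in the input length along this family of words). -/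

import Mathlib

/-- A deterministic finite automaton with translucent letters (DFAwtl):
`delta` is a partial transition function, `start` the initial state,
`accept` the set of final states. -/
structure DFAwtl (Q V : Type*) where
  delta : Q → V → Option Q
  start : Q
  accept : Set Q

namespace DFAwtl

variable {Q V : Type*}

/-- Sequential step: `(s, a·y) → (p, y)` when `δ(s,a) = p`. -/
def SeqStep (M : DFAwtl Q V) (c c' : Q × List V) : Prop :=
  ∃ a : V, c.2 = a :: c'.2 ∧ M.delta c.1 a = some c'.1

/-- Jumping step: `(s, x·a·y) ↻ (p, x·y)` when `x ≠ ε`, `δ(s,a) = p`, and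
`δ(s,b)` is undefined for every letter `b` occurring in `x`. -/
def JumpStep (M : DFAwtl Q V) (c c' : Q × List V) : Prop :=
  ∃ (x y : List V) (a : V), x ≠ [] ∧ c.2 = x ++ a :: y ∧ c'.2 = x ++ y ∧
    M.delta c.1 a = some c'.1 ∧ ∀ b ∈ x, M.delta c.1 b = none

/-- Either a sequential or a jumping step. -/
def Step (M : DFAwtl Q V) (c c' : Q × List V) : Prop :=
  M.SeqStep c c' ∨ M.JumpStep c c'

/-- Reflexive–transitive closure of sequential steps (the relation `→*`). -/
def SeqSteps (M : DFAwtl Q V) : Q × List V → Q × List V → Prop :=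
  Relation.ReflTransGen M.SeqStep

/-- Reflexive–transitive closure of all steps (the relation `⊨*`). -/
def Steps (M : DFAwtl Q V) : Q × List V → Q × List V → Prop :=
  Relation.ReflTransGen M.Step

/-- `StepsN M c c' k` : configuration `c'` is reachable from `c` by a computation
containing exactly `k` jumping steps. -/
inductive StepsN (M : DFAwtl Q V) : Q × List V → Q × List V → ℕ → Prop
  | refl (c : Q × List V) : StepsN M c c 0
  | seq {c c' c'' : Q × List V} {n : ℕ} :
      M.SeqStep c c' → StepsN M c' c'' n → StepsN M c c'' n
  | jump {c c' c'' : Q × List V} {n : ℕ} :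
      M.JumpStep c c' → StepsN M c' c'' n → StepsN M c c'' (n + 1)

/-- The language accepted by `M`. -/
def lang (M : DFAwtl Q V) : Set (List V) :=
  {w | ∃ f ∈ M.accept, M.Steps (M.start, w) (f, [])}

/-- `M` accepts `w` by a computation with exactly `k` jumping steps. -/
def AcceptsIn (M : DFAwtl Q V) (w : List V) (k : ℕ) : Prop :=
  ∃ f ∈ M.accept, M.StepsN (M.start, w) (f, []) k

/-- The jump complexity of a word: the (for a deterministic machine, unique)
number of jumping steps in an accepting computation on `w`. -/
noncomputable def jc (M : DFAwtl Q V) (w : List V) : ℕ :=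
  sInf {k | M.AcceptsIn w k}

/-- The jump complexity function: the maximal number of jumps over accepted
words of length `n`. -/
noncomputable def JC (M : DFAwtl Q V) (n : ℕ) : ℕ :=
  sSup {k | ∃ w ∈ M.lang, w.length = n ∧ M.jc w = k}

/-- `JC_M` is bounded by a constant. -/
def ConstBounded (M : DFAwtl Q V) : Prop :=
  ∃ c : ℕ, ∀ w ∈ M.lang, M.jc w ≤ c

/-- Extended (sequential) transition function on words. -/
def deltaStar (M : DFAwtl Q V) (q : Q) (w : List V) : Option Q :=
  w.foldl (fun o a => o.bind fun p => M.delta p a) (some q)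

/-- A state `q` is `a`-deficient if `δ(q,a)` is undefined. -/
def Deficient (M : DFAwtl Q V) (q : Q) (a : V) : Prop :=
  M.delta q a = none

/-- The set `⟨q,a⟩` (empty when `δ(q,a)` is defined). -/
def angleSet (M : DFAwtl Q V) (q : Q) (a : V) : Set Q :=
  {s | M.delta q a = none ∧ ∃ x : List V, x ≠ [] ∧
    M.SeqSteps (q, x) (s, []) ∧ M.Steps (s, a :: x) (q, [])}

/-- The set `[q,a]` (empty when `δ(q,a)` is defined). -/
def bracketSet (M : DFAwtl Q V) (q : Q) (a : V) : Set Q :=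
  {s | M.delta q a = none ∧ ∃ x : List V, x ≠ [] ∧
    M.SeqSteps (q, x) (s, []) ∧ M.SeqSteps (s, a :: x) (q, [])}

/-- Every state of the automaton is useful. -/
def AllUseful (M : DFAwtl Q V) : Prop :=
  ∀ q : Q, (∃ x : List V, M.SeqSteps (M.start, x) (q, [])) ∧
    (∃ (y : List V) (f : Q), f ∈ M.accept ∧ M.SeqSteps ((q : Q), y) (f, []))

/-- `δ(q,x')` is `a`-deficient for every prefix `x'` of `x`. -/
def PrefixDeficient (M : DFAwtl Q V) (q : Q) (a : V) (x : List V) : Prop :=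
  ∀ x' : List V, ∀ p : Q, x' <+: x → M.deltaStar q x' = some p → M.delta p a = none

/-- `δ(q,y')` is `a`-deficient for every proper prefix `y'` of `y`. -/
def ProperPrefixDeficient (M : DFAwtl Q V) (q : Q) (a : V) (y : List V) : Prop :=
  ∀ y' : List V, ∀ p : Q, y' <+: y → y' ≠ y → M.deltaStar q y' = some p → M.delta p a = none

/-- The condition of Claim 2: a pair `(q,a)` with `δ(q,a)` undefined, a nonempty
cycle in `q` visiting only `a`-deficient states, and an accepting path from `q`
reading a word `y` without `a` through `a`-deficient states and then an `a`. -/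
def ClaimTwoCondition (M : DFAwtl Q V) (q : Q) (a : V) : Prop :=
  M.delta q a = none ∧
  (∃ x : List V, x ≠ [] ∧ M.SeqSteps (q, x) (q, []) ∧ M.PrefixDeficient q a x) ∧
  (∃ (y z : List V) (f : Q), a ∉ y ∧ f ∈ M.accept ∧
    M.SeqSteps (q, y ++ a :: z) (f, []) ∧ M.ProperPrefixDeficient q a y)

end DFAwtl

namespace DFAwtl

variable {Q V : Type*}

/-- `p 0, p 1, …, p n = p 0` is a circuit in the transition graph of `M`,
with the `i`-th edge labelled by the letter `a i`. -/
def IsCircuit (M : DFAwtl Q V) (n : ℕ) (p : ℕ → Q) (a : ℕ → V) : Prop :=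
  0 < n ∧ p n = p 0 ∧ ∀ i < n, M.delta (p i) (a i) = some (p (i + 1))

/-- The circuit is `x`-jumping: every state of the circuit from which an `x` is read
is `b`-deficient for some letter `b`, and at least one edge is labelled by a letter
other than `x`. -/
def IsXJumpingCircuit (M : DFAwtl Q V) (n : ℕ) (p : ℕ → Q) (a : ℕ → V) (x : V) : Prop :=
  M.IsCircuit n p a ∧ (∀ i < n, a i = x → ∃ b : V, M.delta (p i) b = none) ∧
    ∃ i < n, a i ≠ x

/-- The state `q` is reachable from the initial state. -/
def ReachableState (M : DFAwtl Q V) (q : Q) : Prop :=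
  ∃ u : List V, M.Steps (M.start, u) (q, [])

end DFAwtl
-- end preamble

/-!
Every state on the cycle labelled `x` skips `a`, so the machine reads a whole `x` standing behind a
pending `a` at the cost of one jump per letter and returns to `q` with the `a` still pending. The
word `u·a·xⁿ·y·z` is thus consumed as `u`, then `xⁿ` and `y` behind the pending `a`, then `a·z` with
no jump at all. A step skips exactly the longest prefix of letters undefined in the current state,
so the accepting computation is unique and `jc` is the number of jumps in the one just described.
-/

namespace DFAwtl

variable {Q V : Type*} {M : DFAwtl Q V}

/-- A step, sequential or jumping according to whether `x` is empty, that skips exactly the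
prefix `x` of the remaining input: the common form in which determinism is proved once for both. -/
def SkipStep (M : DFAwtl Q V) (x : List V) (c c' : Q × List V) : Prop :=
  ∃ (b : V) (y : List V), c.2 = x ++ b :: y ∧ c'.2 = x ++ y ∧
    M.delta c.1 b = some c'.1 ∧ ∀ d ∈ x, M.delta c.1 d = none

theorem seqStep_iff_skipStep {c c' : Q × List V} : M.SeqStep c c' ↔ M.SkipStep [] c c' := by
  simp [SeqStep, SkipStep]

theorem jumpStep_iff_skipStep {c c' : Q × List V} :
    M.JumpStep c c' ↔ ∃ x ≠ [], M.SkipStep x c c' := by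
  constructor
  · rintro ⟨x, y, b, hx, h⟩
    exact ⟨x, hx, b, y, h⟩
  · rintro ⟨x, hx, b, y, h⟩
    exact ⟨x, y, b, hx, h⟩

theorem SkipStep.eq_takeWhile {x : List V} {c c' : Q × List V} (h : M.SkipStep x c c') :
    x = c.2.takeWhile fun d => (M.delta c.1 d).isNone := by
  obtain ⟨b, y, hc, -, hb, hx⟩ := h
  rw [hc, List.takeWhile_append_of_pos (by simpa using hx),
    List.takeWhile_cons_of_neg (by simp [hb]), List.append_nil]

theorem SkipStep.deterministic {x x' : List V} {c d e : Q × List V}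
    (hd : M.SkipStep x c d) (he : M.SkipStep x' c e) : x = x' ∧ d = e := by
  obtain rfl : x = x' := hd.eq_takeWhile.trans he.eq_takeWhile.symm
  obtain ⟨b, y, hc, hdw, hb, -⟩ := hd
  obtain ⟨b', y', hc', hew, hb', -⟩ := he
  obtain ⟨rfl, rfl⟩ := List.cons.inj (List.append_cancel_left (hc.symm.trans hc'))
  exact ⟨rfl, Prod.ext (Option.some.inj (hb.symm.trans hb')) (hdw.trans hew.symm)⟩

theorem SeqStep.deterministic {c d e : Q × List V} (hd : M.SeqStep c d) (he : M.SeqStep c e) :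
    d = e :=
  ((seqStep_iff_skipStep.mp hd).deterministic (seqStep_iff_skipStep.mp he)).2

theorem JumpStep.deterministic {c d e : Q × List V} (hd : M.JumpStep c d)
    (he : M.JumpStep c e) : d = e := by
  obtain ⟨_, -, hd⟩ := jumpStep_iff_skipStep.mp hd
  obtain ⟨_, -, he⟩ := jumpStep_iff_skipStep.mp he
  exact (hd.deterministic he).2

theorem SeqStep.not_jumpStep {c d e : Q × List V} (hd : M.SeqStep c d) : ¬ M.JumpStep c e := by
  intro he
  obtain ⟨x, hx, he⟩ := jumpStep_iff_skipStep.mp he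
  exact hx (he.deterministic (seqStep_iff_skipStep.mp hd)).1

theorem not_step_nil (p : Q) (c : Q × List V) : ¬ M.Step (p, []) c := by
  simp [Step, SeqStep, JumpStep]

theorem StepsN.jumps_unique {c d e : Q × List V} {k l : ℕ}
    (hcd : M.StepsN c d k) (hce : M.StepsN c e l)
    (hd : ∀ c', ¬ M.Step d c') (he : ∀ c', ¬ M.Step e c') : k = l := by
  induction hcd generalizing l with
  | refl =>
    cases hce with
    | refl => rfl
    | seq step _ => exact (hd _ (.inl step)).elim
    | jump step _ => exact (hd _ (.inr step)).elim
  | seq step _ ih =>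
    cases hce with
    | refl => exact (he _ (.inl step)).elim
    | seq step' rest =>
      obtain rfl := step.deterministic step'
      exact ih rest hd
    | jump step' _ => exact (step.not_jumpStep step').elim
  | jump step _ ih =>
    cases hce with
    | refl => exact (he _ (.inr step)).elim
    | seq step' _ => exact (step'.not_jumpStep step).elim
    | jump step' rest =>
      obtain rfl := step.deterministic step'
      rw [ih rest hd]

theorem StepsN.trans {c d e : Q × List V} {k l : ℕ} (hcd : M.StepsN c d k)
    (hde : M.StepsN d e l) : M.StepsN c e (k + l) := by
  induction hcd with
  | refl => rwa [Nat.zero_add]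
  | seq step _ ih => exact .seq step (ih hde)
  | jump step _ ih =>
    rw [Nat.add_right_comm]
    exact .jump step (ih hde)

theorem steps_iff_exists_stepsN {c d : Q × List V} : M.Steps c d ↔ ∃ k, M.StepsN c d k := by
  constructor
  · intro h
    induction h using Relation.ReflTransGen.head_induction_on with
    | refl => exact ⟨0, .refl _⟩
    | head step _ ih =>
      obtain ⟨k, hk⟩ := ih
      rcases step with step | step
      · exact ⟨k, .seq step hk⟩
      · exact ⟨k + 1, .jump step hk⟩
  · rintro ⟨k, h⟩
    induction h with
    | refl => exact .refl
    | seq step _ ih => exact .head (.inl step) ih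
    | jump step _ ih => exact .head (.inr step) ih

theorem SeqSteps.stepsN_zero {c d : Q × List V} (h : M.SeqSteps c d) : M.StepsN c d 0 := by
  induction h using Relation.ReflTransGen.head_induction_on with
  | refl => exact .refl _
  | head step _ ih => exact .seq step ih

theorem SeqStep.append_right {c d : Q × List V} (h : M.SeqStep c d) (t : List V) :
    M.SeqStep (c.1, c.2 ++ t) (d.1, d.2 ++ t) := by
  obtain ⟨b, hc, hb⟩ := h
  exact ⟨b, by simp [hc], hb⟩

theorem JumpStep.append_right {c d : Q × List V} (h : M.JumpStep c d) (t : List V) :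
    M.JumpStep (c.1, c.2 ++ t) (d.1, d.2 ++ t) := by
  obtain ⟨x, y, b, hx, hc, hd, hb⟩ := h
  exact ⟨x, y ++ t, b, hx, by simp [hc], by simp [hd], hb⟩

theorem StepsN.append_right {c d : Q × List V} {k : ℕ} (h : M.StepsN c d k) (t : List V) :
    M.StepsN (c.1, c.2 ++ t) (d.1, d.2 ++ t) k := by
  induction h with
  | refl => exact .refl _
  | seq step _ ih => exact .seq (step.append_right t) ih
  | jump step _ ih => exact .jump (step.append_right t) ih

theorem AcceptsIn.mem_lang {w : List V} {k : ℕ} (h : M.AcceptsIn w k) : w ∈ M.lang := by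
  obtain ⟨f, hf, h⟩ := h
  exact ⟨f, hf, steps_iff_exists_stepsN.mpr ⟨k, h⟩⟩

theorem AcceptsIn.unique {w : List V} {k l : ℕ} (hk : M.AcceptsIn w k) (hl : M.AcceptsIn w l) :
    k = l := by
  obtain ⟨f, -, hk⟩ := hk
  obtain ⟨g, -, hl⟩ := hl
  exact hk.jumps_unique hl (not_step_nil f) (not_step_nil g)

theorem AcceptsIn.jc_eq {w : List V} {k : ℕ} (h : M.AcceptsIn w k) : M.jc w = k :=
  (h.unique (Nat.sInf_mem (s := {l | M.AcceptsIn w l}) ⟨k, h⟩)).symm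

theorem seqSteps_nil_iff {p r : Q} : M.SeqSteps (p, []) (r, []) ↔ p = r := by
  constructor
  · intro h
    rcases h.cases_head with h | ⟨_, step, -⟩
    · exact congrArg Prod.fst h
    · exact (not_step_nil p _ (.inl step)).elim
  · rintro rfl
    exact .refl

theorem seqSteps_cons_iff {p r : Q} {b : V} {w : List V} :
    M.SeqSteps (p, b :: w) (r, []) ↔ ∃ s, M.delta p b = some s ∧ M.SeqSteps (s, w) (r, []) := by
  constructor
  · intro h
    rcases h.cases_head with h | ⟨⟨s, v⟩, ⟨b', hw, hb⟩, rest⟩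
    · exact (List.cons_ne_nil b w (congrArg Prod.snd h)).elim
    · obtain ⟨rfl, rfl⟩ := List.cons.inj hw
      exact ⟨s, hb, rest⟩
  · rintro ⟨s, hb, rest⟩
    exact .head ⟨b, rfl, hb⟩ rest

theorem seqSteps_append_iff {p r : Q} {v w : List V} :
    M.SeqSteps (p, v ++ w) (r, []) ↔
      ∃ s, M.SeqSteps (p, v) (s, []) ∧ M.SeqSteps (s, w) (r, []) := by
  induction v generalizing p with
  | nil => simp [seqSteps_nil_iff]
  | cons b v ih =>
    simp only [List.cons_append, seqSteps_cons_iff, ih]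
    tauto

theorem PrefixDeficient.properPrefixDeficient {q : Q} {a : V} {x : List V}
    (h : M.PrefixDeficient q a x) : M.ProperPrefixDeficient q a x :=
  fun x' p hx' _ hp => h x' p hx' hp

theorem ProperPrefixDeficient.delta_eq_none {p : Q} {a b : V} {w : List V}
    (h : M.ProperPrefixDeficient p a (b :: w)) : M.delta p a = none :=
  h [] p List.nil_prefix (List.cons_ne_nil b w).symm rfl

theorem ProperPrefixDeficient.tail {p s : Q} {a b : V} {w : List V}
    (h : M.ProperPrefixDeficient p a (b :: w)) (hs : M.delta p b = some s) :
    M.ProperPrefixDeficient s a w := by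
  intro w' r hw' hne hr
  exact h (b :: w') r (by simpa using hw') (by simpa using hne) (by simpa [deltaStar, hs] using hr)

theorem SeqSteps.stepsN_cons_append {p r : Q} {a : V} {w : List V}
    (h : M.SeqSteps (p, w) (r, [])) (hdef : M.ProperPrefixDeficient p a w) (t : List V) :
    M.StepsN (p, a :: (w ++ t)) (r, a :: t) w.length := by
  induction w generalizing p with
  | nil =>
    obtain rfl := seqSteps_nil_iff.mp h
    exact .refl _
  | cons b w ih =>
    obtain ⟨s, hs, rest⟩ := seqSteps_cons_iff.mp h
    have jump : M.JumpStep (p, a :: b :: (w ++ t)) (s, a :: (w ++ t)) :=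
      ⟨[a], w ++ t, b, List.cons_ne_nil _ _, rfl, rfl, hs, by simpa using hdef.delta_eq_none⟩
    exact .jump jump (ih rest (hdef.tail hs))

theorem SeqSteps.stepsN_cons_flatten_replicate_append {q : Q} {a : V} {x : List V}
    (hcyc : M.SeqSteps (q, x) (q, [])) (hdef : M.ProperPrefixDeficient q a x)
    (n : ℕ) (t : List V) :
    M.StepsN (q, a :: ((List.replicate n x).flatten ++ t)) (q, a :: t) (n * x.length) := by
  induction n with
  | zero => simpa using StepsN.refl _
  | succ n ih =>
    have lap := hcyc.stepsN_cons_append hdef ((List.replicate n x).flatten ++ t)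
    rw [Nat.succ_mul, Nat.add_comm (n * x.length)]
    simpa only [List.replicate_succ, List.flatten_cons, List.append_assoc] using lap.trans ih

theorem acceptsIn_append_cons_flatten_replicate {q f : Q} {a : V} {u x y z : List V} {k : ℕ}
    (hu : M.StepsN (M.start, u) (q, []) k)
    (hcyc : M.SeqSteps (q, x) (q, [])) (hxdef : M.ProperPrefixDeficient q a x)
    (hf : f ∈ M.accept) (hyz : M.SeqSteps (q, y ++ a :: z) (f, []))
    (hydef : M.ProperPrefixDeficient q a y) (n : ℕ) :
    M.AcceptsIn (u ++ a :: ((List.replicate n x).flatten ++ y ++ z))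
      (k + (n * x.length + y.length)) := by
  obtain ⟨s, hy, haz⟩ := seqSteps_append_iff.mp hyz
  have read_u := hu.append_right (a :: ((List.replicate n x).flatten ++ (y ++ z)))
  have read_x := hcyc.stepsN_cons_flatten_replicate_append hxdef n (y ++ z)
  have read_y := hy.stepsN_cons_append hydef z
  rw [List.append_assoc]
  exact ⟨f, hf, read_u.trans (read_x.trans (read_y.trans haz.stepsN_zero))⟩

end DFAwtl

theorem stmt_3_general {Q V : Type*} (M : DFAwtl Q V)
    (q f : Q) (a : V) (u x y z : List V)
    (hu : M.Steps (M.start, u) (q, []))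
    (hx : x ≠ []) (hcyc : M.SeqSteps (q, x) (q, []))
    (hxdef : M.PrefixDeficient q a x)
    (hf : f ∈ M.accept)
    (hyz : M.SeqSteps (q, y ++ a :: z) (f, []))
    (hydef : M.ProperPrefixDeficient q a y) :
    (∀ n : ℕ,
      u ++ a :: ((List.replicate n x).flatten ++ y ++ z) ∈ M.lang ∧
        n ≤ M.jc (u ++ a :: ((List.replicate n x).flatten ++ y ++ z))) ∧
      ¬ M.ConstBounded := by
  obtain ⟨k, hu⟩ := DFAwtl.steps_iff_exists_stepsN.mp hu
  have accepts := DFAwtl.acceptsIn_append_cons_flatten_replicate hu hcyc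
    hxdef.properPrefixDeficient hf hyz hydef
  have le_jc (n : ℕ) : n ≤ M.jc (u ++ a :: ((List.replicate n x).flatten ++ y ++ z)) := by
    rw [(accepts n).jc_eq]
    have := Nat.le_mul_of_pos_right n (List.length_pos_iff.mpr hx)
    lia
  refine ⟨fun n => ⟨(accepts n).mem_lang, le_jc n⟩, ?_⟩
  rintro ⟨c, hc⟩
  exact absurd ((le_jc (c + 1)).trans (hc _ (accepts (c + 1)).mem_lang)) c.not_succ_le_self

/-- Claim 2: under the stated conditions on `(q,a)`, the words
`u·a·xⁿ·y·z` are accepted with at least `n` jumps; hence `JC_M` is not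
constant-bounded. -/
theorem stmt_3 {Q V : Type*} [Fintype Q] [Fintype V] (M : DFAwtl Q V)
    (q f : Q) (a : V) (u x y z : List V)
    (ha : M.delta q a = none)
    (hu : M.Steps (M.start, u) (q, []))
    (hx : x ≠ []) (hcyc : M.SeqSteps (q, x) (q, []))
    (hxdef : M.PrefixDeficient q a x)
    (hay : a ∉ y) (hf : f ∈ M.accept)
    (hyz : M.SeqSteps (q, y ++ a :: z) (f, []))
    (hydef : M.ProperPrefixDeficient q a y) :
    (∀ n : ℕ, 1 ≤ n →
      u ++ a :: ((List.replicate n x).flatten ++ y ++ z) ∈ M.lang ∧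
        n ≤ M.jc (u ++ a :: ((List.replicate n x).flatten ++ y ++ z))) ∧
      ¬ M.ConstBounded := by
  obtain ⟨accepted, unbounded⟩ := stmt_3_general M q f a u x y z hu hx hcyc hxdef hf hyz hydef
  exact ⟨fun n _ => accepted n, unbounded⟩
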